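/- arXiv:1610.08885 — 2 statements merged into one kernel-verified Lean document; each statement's English description precedes it below -/
import Mathlib

section
/- Let b ∈ ℝ^n have all entries nonzero. Then the smallest eigenvalue λ of W(b) is positive, its eigenspace is one-dimensional, and every eigenvector x of W(b) for λ has all entries nonzero and satisfies: either (−1)^i sgn(x_i) = sgn(b_i) for all i, or (−1)^i sgn(x_i) = −sgn(b_i) for all i. -/
open Matrix BigOperators

/-- The Cauchy matrix with entries `1/(λᵢ + λⱼ)`. -/
noncomputable def cauchyPsi (n : ℕ) (lam : Fin n → ℝ) : Matrix (Fin n) (Fin n) ℝ :=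
  Matrix.of fun i j => 1 / (lam i + lam j)

/-- `W(b) = diag(b) Ψ diag(b)`. -/
noncomputable def cauchyW (n : ℕ) (lam : Fin n → ℝ) (b : Fin n → ℝ) :
    Matrix (Fin n) (Fin n) ℝ :=
  Matrix.diagonal b * cauchyPsi n lam * Matrix.diagonal b

lemma psi_form {ι : Type*} [DecidableEq ι] (s : Finset ι) (lam : ι → ℝ) (hpos : ∀ i, 0 < lam i)
    (hinj : Function.Injective lam) : ∀ x : ι → ℝ,
    0 ≤ ∑ i ∈ s, ∑ j ∈ s, x i * x j / (lam i + lam j) ∧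
    (∑ i ∈ s, ∑ j ∈ s, x i * x j / (lam i + lam j) = 0 → ∀ i ∈ s, x i = 0) := by
  induction s using Finset.induction_on with
  | empty => simp
  | insert a s ha ih =>
    intro x
    have key : ∑ i ∈ insert a s, ∑ j ∈ insert a s, x i * x j / (lam i + lam j) =
        2 * lam a * (x a / (2 * lam a) + ∑ i ∈ s, x i / (lam a + lam i)) ^ 2 +
        ∑ i ∈ s, ∑ j ∈ s, (x i * ((lam i - lam a) / (lam i + lam a))) *
          (x j * ((lam j - lam a) / (lam j + lam a))) / (lam i + lam j) := by
      have h1 : ∀ i j, (x i * ((lam i - lam a) / (lam i + lam a))) *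
          (x j * ((lam j - lam a) / (lam j + lam a))) / (lam i + lam j) =
          x i * x j / (lam i + lam j) -
            2 * lam a * ((x i / (lam a + lam i)) * (x j / (lam a + lam j))) := by
        intro i j
        have := hpos i
        have := hpos j
        have := hpos a
        field_simp
        ring
      simp only [h1, Finset.sum_insert ha, Finset.sum_sub_distrib, Finset.sum_add_distrib]
      simp only [← Finset.mul_sum, ← Finset.sum_mul]
      have h2 : ∑ j ∈ s, x a * x j / (lam a + lam j) = x a * ∑ i ∈ s, x i / (lam a + lam i) := by
        rw [Finset.mul_sum]; exact Finset.sum_congr rfl fun i _ => by ring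
      have h3 : ∑ j ∈ s, x j * x a / (lam j + lam a) = x a * ∑ i ∈ s, x i / (lam a + lam i) := by
        rw [Finset.mul_sum]; exact Finset.sum_congr rfl fun i _ => by rw [add_comm]; ring
      rw [h2, h3]
      have := hpos a
      generalize ∑ i ∈ s, x i / (lam a + lam i) = S
      field_simp
      ring
    obtain ⟨i1, i2⟩ := ih (fun i => x i * ((lam i - lam a) / (lam i + lam a)))
    have hq : 0 ≤ 2 * lam a * (x a / (2 * lam a) + ∑ i ∈ s, x i / (lam a + lam i)) ^ 2 := by
      have := hpos a
      positivity
    rw [key]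
    refine ⟨add_nonneg hq i1, fun h => ?_⟩
    have e1 := i2 (by linarith)
    have e2 : ∀ i ∈ s, x i = 0 := by
      intro i hi
      have hne : lam i - lam a ≠ 0 := by
        intro h
        have : i = a := hinj (by linarith)
        exact ha (this ▸ hi)
      have hp : lam i + lam a ≠ 0 := by have := hpos i; have := hpos a; positivity
      have := e1 i hi
      simpa [hne, hp] using this
    have e3 : ∑ i ∈ s, x i / (lam a + lam i) = 0 := Finset.sum_eq_zero fun i hi => by simp [e2 i hi]
    have e4 : 2 * lam a * (x a / (2 * lam a) + ∑ i ∈ s, x i / (lam a + lam i)) ^ 2 = 0 := by linarith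
    have hp := (hpos a).ne'
    rw [e3] at e4
    intro i hi
    rcases Finset.mem_insert.1 hi with rfl | hi
    · simpa [hp] using e4
    · exact e2 i hi

noncomputable def cc (n : ℕ) (lam : Fin n → ℝ) (j : Fin n) : ℝ :=
  (∏ i, (lam j + lam i)) / ∏ i ∈ Finset.univ.erase j, (lam j - lam i)

lemma cc_sum (n : ℕ) (lam : Fin n → ℝ) (hpos : ∀ i, 0 < lam i)
    (hinj : Function.Injective lam) (k : Fin n) : ∑ j, cc n lam j / (lam k + lam j) = 1 := by
  classical
  let P : Polynomial ℝ := ∏ i ∈ Finset.univ.erase k, (Polynomial.X + Polynomial.C (lam i))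
  have hm : P.Monic := Polynomial.monic_prod_of_monic _ _ fun i _ => Polynomial.monic_X_add_C _
  have hd : P.natDegree = n - 1 := by
    simp only [P]
    rw [Polynomial.natDegree_prod_of_monic _ _ fun i _ => Polynomial.monic_X_add_C _]
    simp
  have hn : 0 < n := k.pos
  have := Lagrange.leadingCoeff_eq_sum (s := Finset.univ) (v := lam) (hinj.injOn) (P := P) (by
    rw [Polynomial.degree_eq_natDegree hm.ne_zero, hd]
    simp only [Finset.card_univ, Fintype.card_fin]
    norm_cast
    omega)
  rw [hm.leadingCoeff] at this
  rw [this]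
  refine Finset.sum_congr rfl fun j _ => ?_
  have hp : lam k + lam j ≠ 0 := by have := hpos k; have := hpos j; positivity
  rw [cc, ← Finset.mul_prod_erase _ _ (Finset.mem_univ k)]
  simp only [P, Polynomial.eval_prod, Polynomial.eval_add, Polynomial.eval_X, Polynomial.eval_C]
  rw [add_comm (lam j) (lam k)]
  field_simp

lemma cc_sign (n : ℕ) (lam : Fin n → ℝ) (hpos : ∀ i, 0 < lam i)
    (hmono : StrictMono lam) (j : Fin n) : 0 < (-1 : ℝ) ^ (n - 1) * (-1) ^ (j : ℕ) * cc n lam j := by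
  have h : ∏ i ∈ Finset.univ.erase j, (lam j - lam i) =
      (-1) ^ (n - 1 - (j : ℕ)) * ∏ i ∈ Finset.univ.erase j, |lam j - lam i| := by
    have : ((-1 : ℝ)) ^ (n - 1 - (j : ℕ)) =
        ∏ i ∈ Finset.univ.erase j, if j < i then (-1 : ℝ) else 1 := by
      rw [Finset.prod_ite]
      simp only [Finset.prod_const, one_pow, mul_one]
      congr 1
      rw [← Fin.card_Ioi]
      congr 1
      ext i
      simp
      exact fun h => h.ne'
    rw [this, ← Finset.prod_mul_distrib]
    refine Finset.prod_congr rfl fun i hi => ?_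
    split_ifs with hji
    · rw [abs_of_neg (sub_neg.2 (hmono hji))]; ring
    · rw [abs_of_nonneg (sub_nonneg.2 (hmono.monotone (not_lt.1 hji)))]; ring
  have h2 : 0 < ∏ i ∈ Finset.univ.erase j, |lam j - lam i| := by
    refine Finset.prod_pos fun i hi => abs_pos.2 (sub_ne_zero.2 fun h => ?_)
    exact (Finset.ne_of_mem_erase hi) (hmono.injective h.symm)
  have h3 : 0 < ∏ i, (lam j + lam i) := Finset.prod_pos fun i _ => add_pos (hpos j) (hpos i)
  have h4 : (-1 : ℝ) ^ (n - 1) = (-1) ^ (n - 1 - (j : ℕ)) * (-1) ^ (j : ℕ) := by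
    rw [← pow_add]; congr 1; omega
  rw [cc, h, h4]
  have h5 : ((-1 : ℝ) ^ (j : ℕ)) * (-1) ^ (j : ℕ) = 1 := by rw [← mul_pow]; simp
  have h6 : (-1 : ℝ) ^ (n - 1 - (j : ℕ)) ≠ 0 := by simp
  have : (-1 : ℝ) ^ (n - 1 - (j : ℕ)) * (-1) ^ (j : ℕ) * (-1) ^ (j : ℕ) * ((∏ i, (lam j + lam i)) /
    ((-1) ^ (n - 1 - (j : ℕ)) * ∏ i ∈ Finset.univ.erase j, |lam j - lam i|)) =
     (∏ i, (lam j + lam i)) / ∏ i ∈ Finset.univ.erase j, |lam j - lam i| := by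
    rw [mul_assoc (_ ^ _), h5]; field_simp
  rw [this]
  positivity

lemma cauchyW_apply (n : ℕ) (lam d : Fin n → ℝ) (i j : Fin n) :
    cauchyW n lam d i j = d i * d j / (lam i + lam j) := by
  simp [cauchyW, cauchyPsi, Matrix.mul_diagonal, Matrix.diagonal_mul]
  ring

lemma cauchyW_form (n : ℕ) (lam d x : Fin n → ℝ) :
    x ⬝ᵥ (cauchyW n lam d *ᵥ x) = ∑ i, ∑ j, (d i * x i) * (d j * x j) / (lam i + lam j) := by
  simp only [dotProduct, Matrix.mulVec, cauchyW_apply, Finset.mul_sum]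
  refine Finset.sum_congr rfl fun i _ => Finset.sum_congr rfl fun j _ => by ring

lemma cauchyW_herm (n : ℕ) (lam d : Fin n → ℝ) : (cauchyW n lam d).IsHermitian := by
  ext i j
  simp only [Matrix.conjTranspose_apply, cauchyW_apply, star_trivial]
  rw [add_comm, mul_comm]

lemma cauchyW_posDef (n : ℕ) (lam d : Fin n → ℝ) (hpos : ∀ i, 0 < lam i)
    (hinj : Function.Injective lam) (hd : ∀ i, d i ≠ 0) : (cauchyW n lam d).PosDef := by
  refine Matrix.PosDef.of_dotProduct_mulVec_pos (cauchyW_herm n lam d) fun x hx => ?_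
  rw [star_trivial, cauchyW_form]
  obtain ⟨h1, h2⟩ := psi_form Finset.univ lam hpos hinj (fun i => d i * x i)
  refine lt_of_le_of_ne h1 fun h => hx ?_
  ext i
  simpa [hd i] using h2 h.symm i (Finset.mem_univ i)

lemma psi_eq (n : ℕ) (lam : Fin n → ℝ) : cauchyPsi n lam = cauchyW n lam 1 := by
  ext i j
  simp [cauchyW_apply, cauchyPsi]

lemma psi_inv (n : ℕ) (lam : Fin n → ℝ) (hpos : ∀ i, 0 < lam i)
    (hinj : Function.Injective lam) : cauchyPsi n lam * cauchyW n lam (cc n lam) = 1 := by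
  set Ψ := cauchyPsi n lam with hΨ
  have hu : IsUnit Ψ := by
    rw [hΨ, psi_eq]
    exact (cauchyW_posDef n lam 1 hpos hinj (by simp)).isUnit
  have hdet := (Matrix.isUnit_iff_isUnit_det _).1 hu
  have hT : Ψᵀ = Ψ := by
    have := cauchyW_herm n lam 1
    rw [← psi_eq] at this
    simpa [Matrix.IsHermitian, Matrix.conjTranspose_eq_transpose_of_trivial] using this
  have hc : Ψ *ᵥ cc n lam = 1 := by
    ext k
    rw [Pi.one_apply, ← cc_sum n lam hpos hinj k]
    simp only [Matrix.mulVec, dotProduct, hΨ, cauchyPsi, Matrix.of_apply]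
    exact Finset.sum_congr rfl fun i _ => by ring
  have hN1 : Ψ⁻¹ *ᵥ 1 = cc n lam := by
    rw [← hc, Matrix.mulVec_mulVec, Matrix.nonsing_inv_mul _ hdet, Matrix.one_mulVec]
  have hN2 : 1 ᵥ* Ψ⁻¹ = cc n lam := by
    rw [← hN1, ← Matrix.mulVec_transpose, Matrix.transpose_nonsing_inv, hT]
  have hD : Matrix.diagonal lam * Ψ + Ψ * Matrix.diagonal lam = Matrix.vecMulVec 1 1 := by
    ext i j
    have := hpos i
    have := hpos j
    simp [hΨ, cauchyPsi, Matrix.vecMulVec_apply]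
    field_simp
  have hE : Ψ⁻¹ * Matrix.diagonal lam + Matrix.diagonal lam * Ψ⁻¹ =
      Matrix.vecMulVec (cc n lam) (cc n lam) := by
    have h : Ψ⁻¹ * (Matrix.diagonal lam * Ψ + Ψ * Matrix.diagonal lam) * Ψ⁻¹ =
      Matrix.vecMulVec (cc n lam) (cc n lam) := by
      rw [hD, Matrix.mul_vecMulVec, Matrix.vecMulVec_mul, hN1, hN2]
    rw [← h, mul_add, add_mul, ← mul_assoc, ← mul_assoc, Matrix.nonsing_inv_mul _ hdet,
      mul_assoc, Matrix.mul_nonsing_inv _ hdet, mul_one, one_mul]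
  have hM : cauchyW n lam (cc n lam) = Ψ⁻¹ := by
    ext i j
    have h := congrFun (congrFun hE i) j
    have h1 := hpos i
    have h2 := hpos j
    simp [Matrix.vecMulVec_apply] at h
    rw [cauchyW_apply, ← h]
    field_simp
    ring
  rw [hM, Matrix.mul_nonsing_inv _ hdet]

lemma W_inv (n : ℕ) (lam b : Fin n → ℝ) (hpos : ∀ i, 0 < lam i)
    (hinj : Function.Injective lam) (hb : ∀ i, b i ≠ 0) :
    cauchyW n lam b * cauchyW n lam (fun i => cc n lam i / b i) = 1 := by
  ext i k
  have h := congrFun (congrFun (psi_inv n lam hpos hinj) i) k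
  rw [Matrix.mul_apply] at h ⊢
  have : ∀ j, cauchyW n lam b i j * cauchyW n lam (fun i => cc n lam i / b i) j k =
      b i / b k * (cauchyPsi n lam i j * cauchyW n lam (cc n lam) j k) := by
    intro j
    have := hb j
    have := hb k
    rw [psi_eq]
    simp only [cauchyW_apply, Pi.one_apply]
    field_simp
  simp only [this]
  rw [← Finset.mul_sum, h, Matrix.one_apply]
  split_ifs with hik
  · subst hik; simp [hb i]
  · simp

lemma mem_spec_iff {n : ℕ} (A : Matrix (Fin n) (Fin n) ℝ) (t : ℝ) :
    t ∈ spectrum ℝ A ↔ ∃ v : Fin n → ℝ, v ≠ 0 ∧ A *ᵥ v = t • v := by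
  rw [← Matrix.spectrum_toLin', ← Module.End.hasEigenvalue_iff_mem_spectrum]
  constructor
  · intro h
    obtain ⟨v, hv⟩ := h.exists_hasEigenvector
    exact ⟨v, hv.2, by simpa using hv.apply_eq_smul⟩
  · rintro ⟨v, hv, h⟩
    exact Module.End.hasEigenvalue_of_hasEigenvector
      ⟨Module.End.mem_eigenspace_iff.2 (by simpa using h), hv⟩

lemma perron (n : ℕ) (lam d : Fin n → ℝ) (hpos : ∀ i, 0 < lam i)
    (hd : ∀ i, d i ≠ 0) (ν : ℝ) (hν : 0 < ν)
    (hP : (ν • (1 : Matrix (Fin n) (Fin n) ℝ) - cauchyW n lam d).PosSemidef)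
    (x : Fin n → ℝ) (hx : x ≠ 0) (hev : cauchyW n lam d *ᵥ x = ν • x) :
    ∀ i j, 0 < (d i * x i) * (d j * x j) := by
  set y : Fin n → ℝ := fun i => Real.sign (d i) * |x i| with hy
  have hs : ∀ i, Real.sign (d i) * Real.sign (d i) = 1 := by
    intro i
    rcases Real.sign_apply_eq_of_ne_zero (d i) (hd i) with h | h <;> rw [h] <;> norm_num
  have hds : ∀ i, d i * Real.sign (d i) = |d i| := by
    intro i
    rcases lt_or_gt_of_ne (hd i) with h | h
    · rw [Real.sign_of_neg h, abs_of_neg h]; ring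
    · rw [Real.sign_of_pos h, abs_of_pos h]; ring
  have hdy : ∀ i, d i * y i = |d i * x i| := by
    intro i
    rw [abs_mul, ← hds]; simp only [hy]; ring
  have hyy : y ⬝ᵥ y = x ⬝ᵥ x := by
    refine Finset.sum_congr rfl fun i _ => ?_
    have : y i * y i = (Real.sign (d i) * Real.sign (d i)) * (|x i| * |x i|) := by
      simp only [hy]; ring
    rw [this, hs, abs_mul_abs_self, one_mul]
  have hterm : ∀ i j, (d i * x i) * (d j * x j) / (lam i + lam j) ≤
      (d i * y i) * (d j * y j) / (lam i + lam j) := by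
    intro i j
    have := hpos i
    have := hpos j
    rw [hdy, hdy, ← abs_mul]
    gcongr
    exact le_abs_self _
  have hfx : x ⬝ᵥ (cauchyW n lam d *ᵥ x) = ν * (x ⬝ᵥ x) := by
    rw [hev, dotProduct_smul, smul_eq_mul]
  have hle : x ⬝ᵥ (cauchyW n lam d *ᵥ x) ≤ y ⬝ᵥ (cauchyW n lam d *ᵥ y) := by
    rw [cauchyW_form, cauchyW_form]
    exact Finset.sum_le_sum fun i _ => Finset.sum_le_sum fun j _ => hterm i j
  have hfy : star y ⬝ᵥ ((ν • (1 : Matrix (Fin n) (Fin n) ℝ) - cauchyW n lam d) *ᵥ y) =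
      ν * (x ⬝ᵥ x) - y ⬝ᵥ (cauchyW n lam d *ᵥ y) := by
    rw [star_trivial, Matrix.sub_mulVec, dotProduct_sub, Matrix.smul_mulVec, Matrix.one_mulVec,
      dotProduct_smul, smul_eq_mul, hyy]
  have hge := hP.dotProduct_mulVec_nonneg y
  have hz : star y ⬝ᵥ ((ν • (1 : Matrix (Fin n) (Fin n) ℝ) - cauchyW n lam d) *ᵥ y) = 0 := by
    linarith
  have heq : x ⬝ᵥ (cauchyW n lam d *ᵥ x) = y ⬝ᵥ (cauchyW n lam d *ᵥ y) := by linarith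
  have hAy : cauchyW n lam d *ᵥ y = ν • y := by
    have := (hP.dotProduct_mulVec_zero_iff y).1 hz
    rw [Matrix.sub_mulVec, Matrix.smul_mulVec, Matrix.one_mulVec] at this
    exact (sub_eq_zero.1 this).symm
  have hx0 : ∀ i, d i * x i ≠ 0 := by
    intro i h0
    have hxi : x i = 0 := by simpa [hd i] using h0
    have h1 := congrFun hAy i
    have hyi : y i = 0 := by simp [hy, hxi]
    rw [Pi.smul_apply, hyi, smul_zero] at h1
    have h2 : ∑ j, |d j * x j| / (lam i + lam j) = 0 := by
      have : (cauchyW n lam d *ᵥ y) i = d i * ∑ j, |d j * x j| / (lam i + lam j) := by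
        simp only [Matrix.mulVec, dotProduct, cauchyW_apply, Finset.mul_sum, ← hdy]
        exact Finset.sum_congr rfl fun j _ => by ring
      rw [this] at h1
      simpa [hd i] using h1
    rw [Finset.sum_eq_zero_iff_of_nonneg
      (fun j _ => div_nonneg (abs_nonneg _) (add_pos (hpos i) (hpos j)).le)] at h2
    apply hx
    ext j
    have h3 := h2 j (Finset.mem_univ j)
    simpa [hd j, (add_pos (hpos i) (hpos j)).ne'] using h3
  intro i j
  rw [cauchyW_form, cauchyW_form] at heq
  have e1 := (Finset.sum_eq_sum_iff_of_le
    (fun i _ => Finset.sum_le_sum fun j _ => hterm i j)).1 heq i (Finset.mem_univ i)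
  have e2 := (Finset.sum_eq_sum_iff_of_le (fun j _ => hterm i j)).1 e1 j (Finset.mem_univ j)
  rw [hdy, hdy, ← abs_mul, div_left_inj' (add_pos (hpos i) (hpos j)).ne'] at e2
  rw [e2]
  exact abs_pos.2 (mul_ne_zero (hx0 i) (hx0 j))

/-- If every entry of `b` is nonzero, the smallest eigenvalue of `W(b)` is positive
and simple, and every corresponding eigenvector has all entries nonzero with signs
interlacing those of `b`. -/
theorem W_smallest_eigenvalue (n : ℕ) (hn : 0 < n) (lam : Fin n → ℝ)
    (hpos : ∀ i, 0 < lam i) (hmono : StrictMono lam)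
    (b : Fin n → ℝ) (hb : ∀ i, b i ≠ 0) :
    0 < sInf (spectrum ℝ (cauchyW n lam b)) ∧
    (∃ x : Fin n → ℝ, x ≠ 0 ∧
      (cauchyW n lam b).mulVec x = sInf (spectrum ℝ (cauchyW n lam b)) • x) ∧
    ∀ x : Fin n → ℝ, x ≠ 0 →
      (cauchyW n lam b).mulVec x = sInf (spectrum ℝ (cauchyW n lam b)) • x →
        (∀ i, x i ≠ 0) ∧
        ((∀ i : Fin n, (-1 : ℝ) ^ (i : ℕ) * Real.sign (x i) = Real.sign (b i)) ∨
          (∀ i : Fin n, (-1 : ℝ) ^ (i : ℕ) * Real.sign (x i) = -Real.sign (b i))) ∧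
        ∀ w : Fin n → ℝ,
          (cauchyW n lam b).mulVec w = sInf (spectrum ℝ (cauchyW n lam b)) • w →
            ∃ c : ℝ, w = c • x := by
  have hinj := hmono.injective
  have hne : (spectrum ℝ (cauchyW n lam b)).Nonempty := by
    rw [(cauchyW_herm n lam b).spectrum_real_eq_range_eigenvalues]
    exact ⟨_, ⟨0, hn⟩, rfl⟩
  have hfin : (spectrum ℝ (cauchyW n lam b)).Finite := Matrix.finite_real_spectrum
  have hmem := hne.csInf_mem hfin
  have hlb : ∀ t ∈ spectrum ℝ (cauchyW n lam b), sInf (spectrum ℝ (cauchyW n lam b)) ≤ t :=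
    fun t ht => csInf_le hfin.bddBelow ht
  have hspos : ∀ d : Fin n → ℝ, (∀ i, d i ≠ 0) → ∀ t ∈ spectrum ℝ (cauchyW n lam d), 0 < t := by
    intro d hd t ht
    have hp := cauchyW_posDef n lam d hpos hinj hd
    rw [hp.isHermitian.spectrum_real_eq_range_eigenvalues] at ht
    obtain ⟨i, rfl⟩ := ht
    exact hp.eigenvalues_pos i
  generalize sInf (spectrum ℝ (cauchyW n lam b)) = μ at *
  have hμ := hspos b hb μ hmem
  refine ⟨hμ, (mem_spec_iff _ _).1 hmem, ?_⟩
  set d : Fin n → ℝ := fun i => cc n lam i / b i with hd_def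
  have hsg := cc_sign n lam hpos hmono
  have hd : ∀ i, d i ≠ 0 := by
    intro i
    refine div_ne_zero (fun h => ?_) (hb i)
    have := hsg i
    rw [h] at this
    simp at this
  have hWA : cauchyW n lam b * cauchyW n lam d = 1 := W_inv n lam b hpos hinj hb
  have hAW : cauchyW n lam d * cauchyW n lam b = 1 := mul_eq_one_comm.1 hWA
  have hinvev : ∀ (B C : Matrix (Fin n) (Fin n) ℝ), B * C = 1 → ∀ (t : ℝ), 0 < t →
      ∀ v : Fin n → ℝ, C *ᵥ v = t • v → B *ᵥ v = t⁻¹ • v := by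
    intro B C hBC t ht v hv
    have h1 : B *ᵥ (C *ᵥ v) = v := by rw [Matrix.mulVec_mulVec, hBC, Matrix.one_mulVec]
    rw [hv, Matrix.mulVec_smul] at h1
    nth_rewrite 2 [← h1]
    rw [smul_smul, inv_mul_cancel₀ ht.ne', one_smul]
  have hP : (μ⁻¹ • (1 : Matrix (Fin n) (Fin n) ℝ) - cauchyW n lam d).PosSemidef := by
    rw [Matrix.posSemidef_iff_isHermitian_and_spectrum_nonneg]
    constructor
    · refine Matrix.IsHermitian.sub ?_ (cauchyW_herm n lam d)
      simp [Matrix.IsHermitian]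
    · intro t ht
      obtain ⟨v, hv, he⟩ := (mem_spec_iff _ _).1 ht
      have h1 : cauchyW n lam d *ᵥ v = (μ⁻¹ - t) • v := by
        rw [Matrix.sub_mulVec, Matrix.smul_mulVec, Matrix.one_mulVec] at he
        rw [sub_smul, ← he]
        abel
      have h2 := hspos d hd _ ((mem_spec_iff _ _).2 ⟨v, hv, h1⟩)
      have h3 := hinvev _ _ hWA _ h2 v h1
      have h4 := hlb _ ((mem_spec_iff _ _).2 ⟨v, hv, h3⟩)
      have h5 := (le_inv_comm₀ hμ h2).1 h4
      simp only [Set.mem_ofPred_eq]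
      linarith
  have main : ∀ x : Fin n → ℝ, x ≠ 0 → (cauchyW n lam b).mulVec x = μ • x →
      ∀ i j, 0 < (d i * x i) * (d j * x j) := fun x hx he =>
    perron n lam d hpos hd μ⁻¹ (inv_pos.2 hμ) hP x hx (hinvev _ _ hAW μ hμ x he)
  intro x hx he
  have hx0 : ∀ x : Fin n → ℝ, x ≠ 0 → (cauchyW n lam b).mulVec x = μ • x → ∀ i, x i ≠ 0 := by
    intro x hx he i h0
    have := main x hx he i i
    simp [h0] at this
  refine ⟨hx0 x hx he, ?_, ?_⟩
  · -- sign of d i * x i is constant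
    have key : ∀ i j : Fin n, 0 < ((-1 : ℝ) ^ (i : ℕ) * x i * b i) * ((-1 : ℝ) ^ (j : ℕ) * x j * b j) := by
      intro i j
      have h1 := mul_pos (main x hx he i j) (mul_pos (hsg i) (hsg j))
      have h2 : (d i * x i) * (d j * x j) * ((-1 : ℝ) ^ (n - 1) * (-1) ^ (i : ℕ) * cc n lam i *
          ((-1 : ℝ) ^ (n - 1) * (-1) ^ (j : ℕ) * cc n lam j)) =
          (((-1 : ℝ) ^ (n - 1) * (-1 : ℝ) ^ (n - 1)) * (d i ^ 2 * d j ^ 2)) *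
          (((-1 : ℝ) ^ (i : ℕ) * x i * b i) * ((-1 : ℝ) ^ (j : ℕ) * x j * b j)) := by
        have e : ∀ i, cc n lam i = d i * b i := fun i => (div_mul_cancel₀ _ (hb i)).symm
        rw [e i, e j]
        ring
      have h5 : ((-1 : ℝ) ^ (n - 1)) * (-1) ^ (n - 1) = 1 := by rw [← mul_pow]; simp
      rw [h2, h5, one_mul] at h1
      exact (pos_iff_pos_of_mul_pos h1).1 (by have := hd i; have := hd j; positivity)
    have sgn : ∀ (k : ℕ) (u v : ℝ), 0 < (-1 : ℝ) ^ k * u * v →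
        (-1 : ℝ) ^ k * Real.sign u = Real.sign v := by
      intro k u v h
      rcases neg_one_pow_eq_or ℝ k with hk | hk <;> rw [hk] at h ⊢
      · rcases lt_trichotomy u 0 with hu | hu | hu
        · have : v < 0 := by nlinarith
          simp [Real.sign_of_neg, hu, this]
        · simp [hu] at h
        · have : 0 < v := by nlinarith
          simp [Real.sign_of_pos, hu, this]
      · rcases lt_trichotomy u 0 with hu | hu | hu
        · have : 0 < v := by nlinarith
          simp [Real.sign_of_neg, Real.sign_of_pos, hu, this]
        · simp [hu] at h
        · have : v < 0 := by nlinarith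
          simp [Real.sign_of_pos, Real.sign_of_neg, hu, this]
    rcases lt_or_ge 0 ((-1 : ℝ) ^ ((⟨0, hn⟩ : Fin n) : ℕ) * x ⟨0, hn⟩ * b ⟨0, hn⟩) with h | h
    · left
      intro i
      exact sgn _ _ _ ((pos_iff_pos_of_mul_pos (key i ⟨0, hn⟩)).2 h)
    · right
      intro i
      rw [← Real.sign_neg]
      refine sgn _ _ _ ?_
      have := key i ⟨0, hn⟩
      nlinarith
  · intro w hw
    have hxi := hx0 x hx he ⟨0, hn⟩
    refine ⟨w ⟨0, hn⟩ / x ⟨0, hn⟩, ?_⟩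
    by_contra hcon
    refine hx0 (w - (w ⟨0, hn⟩ / x ⟨0, hn⟩) • x) (sub_ne_zero.2 hcon) ?_ ⟨0, hn⟩ ?_
    · rw [Matrix.mulVec_sub, Matrix.mulVec_smul, hw, he, smul_sub, smul_comm]
    · simp [hxi]
end

section
/- Let b ∈ ℝ^n be a unit vector with all entries nonzero, and let x be a unit eigenvector of W(b) corresponding to its smallest eigenvalue. Then for every v ∈ ℝ^n with vᵀ b = 0, the function t ↦ (smallest eigenvalue of W(b + t v)) is differentiable at t = 0 with derivative equal to 2 vᵀ W(x) b. -/
open Matrix BigOperators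

lemma W_apply (n : ℕ) (lam b : Fin n → ℝ) (i j : Fin n) :
    cauchyW n lam b i j = b i * b j / (lam i + lam j) := by
  simp [cauchyW, cauchyPsi, Matrix.mul_diagonal, Matrix.diagonal_mul]
  ring

lemma W_herm (n : ℕ) (lam b : Fin n → ℝ) : (cauchyW n lam b).IsHermitian := by
  ext i j
  simp only [Matrix.conjTranspose_apply, W_apply, star_trivial]
  rw [mul_comm (b j), add_comm (lam j)]

/-- variational facts about the least eigenvalue -/
lemma minEig (n : ℕ) (hn : 0 < n) (A : Matrix (Fin n) (Fin n) ℝ) (hA : A.IsHermitian) :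
    (A - sInf (spectrum ℝ A) • (1 : Matrix (Fin n) (Fin n) ℝ)).PosSemidef ∧
    ∃ y : Fin n → ℝ, y ⬝ᵥ y = 1 ∧ A *ᵥ y = sInf (spectrum ℝ A) • y := by
  have hne : Nonempty (Fin n) := ⟨⟨0, hn⟩⟩
  have hs := hA.spectrum_real_eq_range_eigenvalues
  have hfin : (spectrum ℝ A).Finite := by rw [hs]; exact Set.finite_range _
  have hnon : (spectrum ℝ A).Nonempty := by rw [hs]; exact Set.range_nonempty _
  constructor
  · rw [posSemidef_iff_isHermitian_and_spectrum_nonneg]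
    constructor
    · refine hA.sub ?_
      ext i j
      simp [Matrix.one_apply, eq_comm]
    · intro a ha
      rw [← Algebra.algebraMap_eq_smul_one, ← spectrum.sub_singleton_eq] at ha
      obtain ⟨c, hc, d, hd, rfl⟩ := ha
      rw [Set.mem_singleton_iff] at hd
      subst hd
      have := csInf_le hfin.bddBelow hc
      simpa using this
  · have hm := hnon.csInf_mem hfin
    obtain ⟨j, hj⟩ := (hs ▸ hm : sInf (spectrum ℝ A) ∈ Set.range hA.eigenvalues)
    refine ⟨⇑(hA.eigenvectorBasis j), ?_, ?_⟩
    · have h1 := hA.eigenvectorBasis.orthonormal.1 j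
      have h2 := EuclideanSpace.real_norm_sq_eq (hA.eigenvectorBasis j)
      rw [h1] at h2
      simp only [dotProduct, ← pow_two]
      linarith
    · rw [← hj]; exact hA.mulVec_eigenvectorBasis j

lemma ray (n : ℕ) (hn : 0 < n) (A : Matrix (Fin n) (Fin n) ℝ) (hA : A.IsHermitian)
    (y : Fin n → ℝ) : sInf (spectrum ℝ A) * (y ⬝ᵥ y) ≤ y ⬝ᵥ A *ᵥ y := by
  have := (minEig n hn A hA).1.dotProduct_mulVec_nonneg y
  simp only [star_trivial, Matrix.sub_mulVec, Matrix.smul_mulVec, Matrix.one_mulVec,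
    dotProduct_sub, dotProduct_smul, smul_eq_mul] at this
  linarith

lemma lyap (n : ℕ) (lam : Fin n → ℝ) (hpos : ∀ i, 0 < lam i) (b y : Fin n → ℝ) (i : Fin n) :
    lam i * (cauchyW n lam b *ᵥ y) i + (cauchyW n lam b *ᵥ (fun j => lam j * y j)) i
      = b i * (b ⬝ᵥ y) := by
  simp only [mulVec, dotProduct, W_apply, Finset.mul_sum, ← Finset.sum_add_distrib]
  refine Finset.sum_congr rfl fun j _ => ?_
  have := add_pos (hpos i) (hpos j)
  field_simp

lemma W_ker (n : ℕ) (lam : Fin n → ℝ) (hpos : ∀ i, 0 < lam i) (hmono : StrictMono lam)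
    (hn : 0 < n)
    (b : Fin n → ℝ) (hb : ∀ i, b i ≠ 0) (y : Fin n → ℝ) (hy : cauchyW n lam b *ᵥ y = 0) :
    y = 0 := by
  have hsym : ∀ p q : Fin n → ℝ, p ⬝ᵥ cauchyW n lam b *ᵥ q = (cauchyW n lam b *ᵥ p) ⬝ᵥ q := by
    intro p q
    rw [dotProduct_mulVec, ← mulVec_transpose]
    have := W_herm n lam b
    rw [Matrix.IsHermitian, conjTranspose_eq_transpose_of_trivial] at this
    rw [this]
  have step : ∀ z : Fin n → ℝ, cauchyW n lam b *ᵥ z = 0 →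
      b ⬝ᵥ z = 0 ∧ cauchyW n lam b *ᵥ (fun j => lam j * z j) = 0 := by
    intro z hz
    have h1 : cauchyW n lam b *ᵥ (fun j => lam j * z j) = (b ⬝ᵥ z) • b := by
      ext i
      have := lyap n lam hpos b z i
      rw [hz] at this
      simp at this
      simp [this, mul_comm]
    have h2 : b ⬝ᵥ z = 0 := by
      have := hsym z (fun j => lam j * z j)
      rw [hz, h1, zero_dotProduct, dotProduct_smul, smul_eq_mul, dotProduct_comm z b] at this
      exact mul_self_eq_zero.mp this
    exact ⟨h2, by rw [h1, h2, zero_smul]⟩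
  have hk : ∀ k : ℕ, cauchyW n lam b *ᵥ (fun j => lam j ^ k * y j) = 0 := by
    intro k
    induction k with
    | zero => simpa using hy
    | succ k ih =>
      have := (step _ ih).2
      simpa only [pow_succ', mul_assoc] using this
  have := Matrix.eq_zero_of_forall_pow_sum_mul_pow_eq_zero (f := lam) (v := fun j => b j * y j)
    hmono.injective (fun i => by
      have := (step _ (hk i)).1
      rw [← this]
      simp only [dotProduct]
      exact Finset.sum_congr rfl fun j _ => by ring)
  ext j
  have h := congrFun this j
  simpa [hb j] using h

lemma W_sym (n : ℕ) (lam b : Fin n → ℝ) (p q : Fin n → ℝ) :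
    p ⬝ᵥ cauchyW n lam b *ᵥ q = (cauchyW n lam b *ᵥ p) ⬝ᵥ q := by
  rw [dotProduct_mulVec, ← mulVec_transpose]
  have := W_herm n lam b
  rw [Matrix.IsHermitian, conjTranspose_eq_transpose_of_trivial] at this
  rw [this]

lemma mu_pos (n : ℕ) (lam : Fin n → ℝ) (hpos : ∀ i, 0 < lam i) (hmono : StrictMono lam)
    (hn : 0 < n) (b : Fin n → ℝ) (hb : ∀ i, b i ≠ 0) (y : Fin n → ℝ) (hy0 : y ≠ 0) (μ : ℝ)
    (hy : cauchyW n lam b *ᵥ y = μ • y) : 0 < μ := by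
  have hne : μ ≠ 0 := by
    rintro rfl
    exact hy0 (W_ker n lam hpos hmono hn b hb y (by simpa using hy))
  have hL : 0 < y ⬝ᵥ (fun i => lam i * y i) := by
    obtain ⟨i, hi⟩ := Function.ne_iff.mp hy0
    have hi : y i ≠ 0 := hi
    have e : ∀ i, y i * (lam i * y i) = lam i * (y i) ^ 2 := fun i => by ring
    simp only [dotProduct, e]
    refine Finset.sum_pos' (fun i _ => mul_nonneg (hpos i).le (sq_nonneg _))
      ⟨i, Finset.mem_univ _, ?_⟩
    have := hpos i
    positivity
  have h1 : cauchyW n lam b *ᵥ (fun j => lam j * y j) =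
      (b ⬝ᵥ y) • b - μ • (fun j => lam j * y j) := by
    ext i
    have := lyap n lam hpos b y i
    rw [hy] at this
    simp at this ⊢
    linarith
  have h2 := W_sym n lam b y (fun j => lam j * y j)
  rw [hy, h1, smul_dotProduct, dotProduct_sub, dotProduct_smul, dotProduct_smul,
    dotProduct_comm y b] at h2
  simp only [smul_eq_mul] at h2
  have h3 : 0 ≤ μ * (y ⬝ᵥ (fun i => lam i * y i)) := by
    nlinarith [mul_self_nonneg (b ⬝ᵥ y)]
  exact lt_of_le_of_ne (nonneg_of_mul_nonneg_left h3 hL) hne.symm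

lemma W_inv_s13 (n : ℕ) (lam : Fin n → ℝ) (hpos : ∀ i, 0 < lam i) (hmono : StrictMono lam)
    (hn : 0 < n) (b : Fin n → ℝ) (hb : ∀ i, b i ≠ 0) :
    ∃ d : Fin n → ℝ, (∀ i, d i ≠ 0) ∧ cauchyW n lam b * cauchyW n lam d = 1 ∧
      cauchyW n lam d * cauchyW n lam b = 1 := by
  have hdet : IsUnit (cauchyW n lam b).det := by
    rw [isUnit_iff_ne_zero]
    intro h
    obtain ⟨y, hy, hy'⟩ := Matrix.exists_mulVec_eq_zero_iff.mpr h
    exact hy (W_ker n lam hpos hmono hn b hb y hy')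
  set W := cauchyW n lam b with hW
  have hM1 : W * W⁻¹ = 1 := Matrix.mul_nonsing_inv _ hdet
  have hM2 : W⁻¹ * W = 1 := Matrix.nonsing_inv_mul _ hdet
  have hMh : (W⁻¹)ᵀ = W⁻¹ := by
    rw [Matrix.transpose_nonsing_inv]
    have := W_herm n lam b
    rw [Matrix.IsHermitian, conjTranspose_eq_transpose_of_trivial] at this
    rw [hW, this]
  have hL : diagonal lam * W + W * diagonal lam = vecMulVec b b := by
    ext i j
    have := add_pos (hpos i) (hpos j)
    simp only [Matrix.add_apply, Matrix.diagonal_mul, Matrix.mul_diagonal, hW, W_apply,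
      vecMulVec_apply]
    field_simp
  have hL2 : W⁻¹ * diagonal lam + diagonal lam * W⁻¹ = vecMulVec (W⁻¹ *ᵥ b) (W⁻¹ *ᵥ b) := by
    have e : W⁻¹ * vecMulVec b b * W⁻¹ = vecMulVec (W⁻¹ *ᵥ b) (W⁻¹ *ᵥ b) := by
      rw [Matrix.mul_vecMulVec, Matrix.vecMulVec_mul, ← mulVec_transpose, hMh]
    rw [← e, ← hL, Matrix.mul_add, Matrix.add_mul]
    rw [Matrix.mul_assoc W⁻¹ (diagonal lam * W), Matrix.mul_assoc (diagonal lam), hM1,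
      ← Matrix.mul_assoc W⁻¹ W, hM2, Matrix.mul_one, Matrix.one_mul]
  have hMd : W⁻¹ = cauchyW n lam (W⁻¹ *ᵥ b) := by
    ext i j
    have h := congrFun (congrFun hL2 i) j
    simp only [Matrix.add_apply, Matrix.diagonal_mul, Matrix.mul_diagonal, vecMulVec_apply] at h
    have := add_pos (hpos i) (hpos j)
    rw [W_apply, eq_div_iff this.ne', ← h]
    ring
  refine ⟨W⁻¹ *ᵥ b, ?_, hMd ▸ hM1, hMd ▸ hM2⟩
  intro i hi
  have h0 : ∀ j, W⁻¹ i j = 0 := by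
    intro j
    rw [hMd, W_apply, hi]; simp
  have := congrFun (congrFun hM2 i) i
  simp [Matrix.mul_apply, h0] at this

lemma simple0 (n : ℕ) (lam : Fin n → ℝ) (hpos : ∀ i, 0 < lam i) (hmono : StrictMono lam)
    (hn : 0 < n) (b : Fin n → ℝ) (hb : ∀ i, b i ≠ 0) (y : Fin n → ℝ)
    (hy : cauchyW n lam b *ᵥ y = sInf (spectrum ℝ (cauchyW n lam b)) • y)
    (hy0 : y ⟨0, hn⟩ = 0) : y = 0 := by
  obtain ⟨d, hd, h1, h2⟩ := W_inv_s13 n lam hpos hmono hn b hb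
  by_contra hyne
  set μ := sInf (spectrum ℝ (cauchyW n lam b)) with hμ
  have hμpos : 0 < μ := mu_pos n lam hpos hmono hn b hb y hyne μ hy
  set M := cauchyW n lam d with hM
  -- M y = μ⁻¹ y
  have hMy : M *ᵥ y = μ⁻¹ • y := by
    have : M *ᵥ (cauchyW n lam b *ᵥ y) = y := by rw [mulVec_mulVec, h2, one_mulVec]
    rw [hy, mulVec_smul] at this
    rw [← this, smul_smul, inv_mul_cancel₀ hμpos.ne', one_smul, this]
  have hherm : (-M).IsHermitian := (W_herm n lam d).neg
  obtain ⟨hpsd, w, hw1, hw2⟩ := minEig n hn (-M) hherm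
  set m := sInf (spectrum ℝ (-M)) with hm
  have hwne : w ≠ 0 := by rintro rfl; simp at hw1
  have hMw : M *ᵥ w = (-m) • w := by
    rw [neg_mulVec] at hw2
    rw [neg_smul, ← hw2, neg_neg]
  have hmpos : 0 < -m := mu_pos n lam hpos hmono hn d hd w hwne (-m) hMw
  have hmu : -m ≤ μ⁻¹ := by
    have e : cauchyW n lam b *ᵥ (M *ᵥ w) = w := by rw [mulVec_mulVec, h1, one_mulVec]
    rw [hMw, mulVec_smul] at e
    have h3 := ray n hn _ (W_herm n lam b) w
    rw [← hμ, hw1] at h3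
    have h4 : (-m) * (w ⬝ᵥ cauchyW n lam b *ᵥ w) = 1 := by
      rw [← smul_eq_mul, ← dotProduct_smul, e, hw1]
    rw [← one_div, le_div_iff₀ hμpos]
    nlinarith
  -- the signed absolute value
  have hray := ray n hn (-M) hherm
  set z : Fin n → ℝ := fun i => SignType.sign (d i) * |y i| with hz
  have hsd : ∀ i, (SignType.sign (d i) : ℝ) * d i = |d i| := fun i => sign_mul_self (d i)
  have hzz : z ⬝ᵥ z = y ⬝ᵥ y := by
    simp only [dotProduct, hz]
    refine Finset.sum_congr rfl fun i _ => ?_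
    have : (SignType.sign (d i) : ℝ) * SignType.sign (d i) = 1 := by
      rcases lt_or_gt_of_ne (hd i) with h | h <;> simp [h]
    calc _ = ((SignType.sign (d i) : ℝ) * SignType.sign (d i)) * (|y i| * |y i|) := by ring
      _ = _ := by rw [this, abs_mul_abs_self, one_mul]
  have hMz : ∀ i, (M *ᵥ z) i = d i * ∑ j, |d j| * |y j| / (lam i + lam j) := by
    intro i
    simp only [mulVec, dotProduct, hM, W_apply, hz, Finset.mul_sum]
    refine Finset.sum_congr rfl fun j _ => ?_
    rw [← hsd j]; ring
  have hge : y ⬝ᵥ M *ᵥ y ≤ z ⬝ᵥ M *ᵥ z := by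
    simp only [dotProduct, hMz]
    refine Finset.sum_le_sum fun i _ => ?_
    have : z i * (d i * ∑ j, |d j| * |y j| / (lam i + lam j)) =
      |d i| * |y i| * ∑ j, |d j| * |y j| / (lam i + lam j) := by
      rw [← hsd i]; simp only [hz]; ring
    rw [this]
    simp only [mulVec, dotProduct, hM, W_apply, Finset.mul_sum]
    refine Finset.sum_le_sum fun j _ => ?_
    have hp := add_pos (hpos i) (hpos j)
    refine (le_abs_self _).trans (le_of_eq ?_)
    rw [abs_mul, abs_mul, abs_div, abs_mul, abs_of_pos hp]
    ring
  have hyy : 0 < y ⬝ᵥ y := by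
    have := dotProduct_star_self_pos_iff (v := y)
    simpa using this.mpr hyne
  have hq : z ⬝ᵥ ((-M - m • (1 : Matrix (Fin n) (Fin n) ℝ)) *ᵥ z) = 0 := by
    refine le_antisymm ?_ (by simpa using hpsd.dotProduct_mulVec_nonneg z)
    simp only [sub_mulVec, neg_mulVec, smul_mulVec, one_mulVec, dotProduct_sub,
      dotProduct_neg, dotProduct_smul, smul_eq_mul]
    rw [hMy, dotProduct_smul, smul_eq_mul] at hge
    rw [hzz]
    nlinarith
  have hk := (hpsd.dotProduct_mulVec_zero_iff z).mp (by simpa using hq)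
  have hk0 := congrFun hk ⟨0, hn⟩
  have hz0 : z ⟨0, hn⟩ = 0 := by simp [hz, hy0]
  simp only [sub_mulVec, neg_mulVec, smul_mulVec, one_mulVec, Pi.sub_apply, Pi.neg_apply,
    Pi.smul_apply, hz0, smul_zero, sub_zero, Pi.zero_apply, neg_eq_zero, hMz, mul_eq_zero,
    hd, false_or] at hk0
  rw [Finset.sum_eq_zero_iff_of_nonneg (fun j _ => by
    have hp := add_pos (hpos ⟨0, hn⟩) (hpos j)
    positivity)] at hk0
  apply hyne
  ext j
  have := hk0 j (Finset.mem_univ _)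
  have hp := add_pos (hpos ⟨0, hn⟩) (hpos j)
  simpa [hp.ne', hd j] using this

lemma simple1 (n : ℕ) (lam : Fin n → ℝ) (hpos : ∀ i, 0 < lam i) (hmono : StrictMono lam)
    (hn : 0 < n) (b : Fin n → ℝ) (hb : ∀ i, b i ≠ 0) (x y : Fin n → ℝ)
    (hx : cauchyW n lam b *ᵥ x = sInf (spectrum ℝ (cauchyW n lam b)) • x)
    (hy : cauchyW n lam b *ᵥ y = sInf (spectrum ℝ (cauchyW n lam b)) • y)
    (hx1 : x ⬝ᵥ x = 1) (hy1 : y ⬝ᵥ y = 1) : y = x ∨ y = -x := by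
  have hx0 : x ⟨0, hn⟩ ≠ 0 := fun h => by
    rw [simple0 n lam hpos hmono hn b hb x hx h] at hx1
    simp at hx1
  have h := simple0 n lam hpos hmono hn b hb (y - (y ⟨0, hn⟩ / x ⟨0, hn⟩) • x)
    (by rw [mulVec_sub, mulVec_smul, hx, hy, smul_sub, smul_comm]) (by simp [hx0])
  generalize y ⟨0, hn⟩ / x ⟨0, hn⟩ = c at h
  have h' : y = c • x := sub_eq_zero.mp h
  have hc : c * c = 1 := by
    rw [h', smul_dotProduct, dotProduct_smul, hx1] at hy1
    simpa using hy1
  rcases mul_self_eq_one_iff.mp hc with rfl | rfl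
  · left; simpa using h'
  · right; simpa using h'

lemma swap (n : ℕ) (lam p q r : Fin n → ℝ) :
    p ⬝ᵥ cauchyW n lam q *ᵥ p = q ⬝ᵥ cauchyW n lam p *ᵥ q := by
  simp only [dotProduct, mulVec, W_apply, Finset.mul_sum]
  refine Finset.sum_congr rfl fun i _ => Finset.sum_congr rfl fun j _ => ?_
  ring

lemma expand (n : ℕ) (lam b v y : Fin n → ℝ) (t : ℝ) :
    y ⬝ᵥ cauchyW n lam (b + t • v) *ᵥ y = y ⬝ᵥ cauchyW n lam b *ᵥ y +
      t * (2 * (v ⬝ᵥ cauchyW n lam y *ᵥ b)) + t ^ 2 * (v ⬝ᵥ cauchyW n lam y *ᵥ v) := by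
  rw [swap n lam y (b + t • v) 0, swap n lam y b 0]
  have h : b ⬝ᵥ cauchyW n lam y *ᵥ v = v ⬝ᵥ cauchyW n lam y *ᵥ b := by
    rw [W_sym, dotProduct_comm]
  simp only [mulVec_add, mulVec_smul, add_dotProduct, dotProduct_add, smul_dotProduct,
    dotProduct_smul, smul_eq_mul, h]
  ring

lemma W_cont (n : ℕ) (lam p q : Fin n → ℝ) :
    Continuous fun y : Fin n → ℝ => p ⬝ᵥ cauchyW n lam y *ᵥ q := by
  simp only [dotProduct, mulVec, W_apply]
  fun_prop

/-- Derivative of the smallest eigenvalue of `W(b)` in a direction `v` tangent to the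
sphere: it equals `2 vᵀ W(x) b`, where `x` is a unit eigenvector for the smallest
eigenvalue of `W(b)`. -/
theorem deriv_smallest_eigenvalue (n : ℕ) (hn : 0 < n) (lam : Fin n → ℝ)
    (hpos : ∀ i, 0 < lam i) (hmono : StrictMono lam)
    (b : Fin n → ℝ) (hb_unit : ∑ i, b i ^ 2 = 1) (hb : ∀ i, b i ≠ 0)
    (x : Fin n → ℝ) (hx_unit : ∑ i, x i ^ 2 = 1)
    (hx_eig : (cauchyW n lam b).mulVec x =
      sInf (spectrum ℝ (cauchyW n lam b)) • x)
    (v : Fin n → ℝ) (hv : v ⬝ᵥ b = 0) :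
    HasDerivAt (fun t : ℝ => sInf (spectrum ℝ (cauchyW n lam (b + t • v))))
      (2 * (v ⬝ᵥ (cauchyW n lam x).mulVec b)) 0 := by
  have hx1 : x ⬝ᵥ x = 1 := by simpa only [dotProduct, ← pow_two] using hx_unit
  choose X hX1 hX2 using fun t : ℝ =>
    (minEig n hn (cauchyW n lam (b + t • v)) (W_herm n lam _)).2
  set f : ℝ → ℝ := fun t => sInf (spectrum ℝ (cauchyW n lam (b + t • v))) with hf
  have hf0 : f 0 = sInf (spectrum ℝ (cauchyW n lam b)) := by simp [hf]
  have hfX : ∀ t, f t = X t ⬝ᵥ cauchyW n lam (b + t • v) *ᵥ X t := by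
    intro t
    rw [hX2, dotProduct_smul, hX1]; simp [hf]
  have hup : ∀ t, f t ≤ f 0 + t * (2 * (v ⬝ᵥ cauchyW n lam x *ᵥ b)) +
      t ^ 2 * (v ⬝ᵥ cauchyW n lam x *ᵥ v) := by
    intro t
    have h := ray n hn _ (W_herm n lam (b + t • v)) x
    rw [expand, hx1, hx_eig, dotProduct_smul, hx1, ← hf0] at h
    simpa using h
  have hlow : ∀ t, f 0 + t * (2 * (v ⬝ᵥ cauchyW n lam (X t) *ᵥ b)) +
      t ^ 2 * (v ⬝ᵥ cauchyW n lam (X t) *ᵥ v) ≤ f t := by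
    intro t
    have h := ray n hn _ (W_herm n lam b) (X t)
    rw [hX1, ← hf0] at h
    rw [hfX t, expand]
    linarith
  -- convergence
  have hK : IsCompact {y : Fin n → ℝ | y ⬝ᵥ y = 1} := by
    refine Metric.isCompact_of_isClosed_isBounded
      (isClosed_eq (by simp only [dotProduct]; fun_prop) continuous_const) ?_
    refine (Metric.isBounded_closedBall (x := (0 : Fin n → ℝ)) (r := 1)).subset ?_
    intro y hy
    rw [mem_closedBall_zero_iff, pi_norm_le_iff_of_nonneg zero_le_one]
    intro i
    rw [Real.norm_eq_abs, ← sq_le_one_iff_abs_le_one]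
    have hy : ∑ i, y i * y i = 1 := hy
    rw [← hy, pow_two]
    exact Finset.single_le_sum (f := fun i => y i * y i)
      (fun i _ => mul_self_nonneg _) (Finset.mem_univ i)
  have hconv : ∀ q : Fin n → ℝ, Filter.Tendsto (fun t => v ⬝ᵥ cauchyW n lam (X t) *ᵥ q)
      (nhds 0) (nhds (v ⬝ᵥ cauchyW n lam x *ᵥ q)) := by
    intro q
    rw [Filter.tendsto_iff_ultrafilter]
    intro U hU
    obtain ⟨y, hy, hyU⟩ := hK.ultrafilter_le_nhds' (U.map X)
      (by
        rw [Ultrafilter.mem_map]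
        exact Filter.univ_mem' hX1)
    have hXU : Filter.Tendsto X U (nhds y) := hyU
    have htU : Filter.Tendsto (fun t : ℝ => t) U (nhds 0) := hU
    have hy1 : y ⬝ᵥ y = 1 := hy
    -- y is a minimizer
    have hA : Filter.Tendsto (fun t => X t ⬝ᵥ cauchyW n lam b *ᵥ X t +
        t * (2 * (v ⬝ᵥ cauchyW n lam (X t) *ᵥ b)) +
        t ^ 2 * (v ⬝ᵥ cauchyW n lam (X t) *ᵥ v)) U
        (nhds (y ⬝ᵥ cauchyW n lam b *ᵥ y + 0 * (2 * (v ⬝ᵥ cauchyW n lam y *ᵥ b)) +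
        0 ^ 2 * (v ⬝ᵥ cauchyW n lam y *ᵥ v))) := by
      have c1 : Continuous fun z : Fin n → ℝ => z ⬝ᵥ cauchyW n lam b *ᵥ z := by
        simp only [dotProduct, mulVec]; fun_prop
      exact (((c1.tendsto y).comp hXU).add
        (htU.mul ((((W_cont n lam v b).tendsto y).comp hXU).const_mul 2))).add
        ((htU.pow 2).mul (((W_cont n lam v v).tendsto y).comp hXU))
    have hB : Filter.Tendsto (fun t : ℝ => f 0 + t * (2 * (v ⬝ᵥ cauchyW n lam x *ᵥ b)) +
      t ^ 2 * (v ⬝ᵥ cauchyW n lam x *ᵥ v)) U (nhds (f 0 + 0 * (2 * (v ⬝ᵥ cauchyW n lam x *ᵥ b)) +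
      0 ^ 2 * (v ⬝ᵥ cauchyW n lam x *ᵥ v))) :=
      ((htU.mul_const _).const_add _).add ((htU.pow 2).mul_const _)
    have hle := le_of_tendsto_of_tendsto' hA hB (fun t => by
      rw [← expand, ← hfX]; exact hup t)
    have hle' : y ⬝ᵥ cauchyW n lam b *ᵥ y ≤ f 0 := by simpa using hle
    have hpsd := (minEig n hn (cauchyW n lam b) (W_herm n lam b)).1
    have hzero := (hpsd.dotProduct_mulVec_zero_iff y).mp (by
      refine le_antisymm ?_ (hpsd.dotProduct_mulVec_nonneg y)
      simp only [star_trivial, sub_mulVec, smul_mulVec, one_mulVec, dotProduct_sub,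
        dotProduct_smul, smul_eq_mul, hy1]
      linarith)
    have hyeig : cauchyW n lam b *ᵥ y = sInf (spectrum ℝ (cauchyW n lam b)) • y := by
      rw [sub_mulVec, smul_mulVec, one_mulVec] at hzero
      exact sub_eq_zero.mp hzero
    have hW : cauchyW n lam y = cauchyW n lam x := by
      rcases simple1 n lam hpos hmono hn b hb x y hx_eig hyeig hx1 hy1 with rfl | rfl
      · rfl
      · ext i j; simp [W_apply]
    rw [← hW]
    exact ((W_cont n lam v q).tendsto y).comp hXU
  -- conclusion
  set D := v ⬝ᵥ cauchyW n lam x *ᵥ b with hD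
  set C := v ⬝ᵥ cauchyW n lam x *ᵥ v with hC
  rw [hasDerivAt_iff_isLittleO]
  have hh : Filter.Tendsto (fun t : ℝ => |2 * (v ⬝ᵥ cauchyW n lam (X t) *ᵥ b) - 2 * D| +
      |t| * (|v ⬝ᵥ cauchyW n lam (X t) *ᵥ v| + |C|)) (nhds 0) (nhds 0) := by
    have := ((((hconv b).const_mul 2).sub_const (2 * D)).abs).add
      ((continuous_abs.tendsto (0 : ℝ)).mul (((hconv v).abs).add_const |C|))
    simpa [← hD] using this
  refine Asymptotics.IsLittleO.of_bound fun c hc => ?_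
  filter_upwards [hh.eventually (gt_mem_nhds hc)] with t ht
  have h1 := hup t
  have h2 := hlow t
  simp only [sub_zero, smul_eq_mul, Real.norm_eq_abs]
  set D' := v ⬝ᵥ cauchyW n lam (X t) *ᵥ b
  set C' := v ⬝ᵥ cauchyW n lam (X t) *ᵥ v
  refine le_trans ?_ (mul_le_mul_of_nonneg_right ht.le (abs_nonneg t))
  have e1 : -(|2 * D' - 2 * D| * |t|) ≤ t * (2 * D') - t * (2 * D) := by
    rw [← abs_mul]
    have := neg_abs_le ((2 * D' - 2 * D) * t)
    linarith
  have e2 : t ^ 2 = |t| * |t| := by rw [abs_mul_abs_self, pow_two]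
  have e3 : -(|t| * |t| * |C'|) ≤ t ^ 2 * C' := by
    rw [e2]; nlinarith [neg_abs_le C', mul_self_nonneg |t|]
  have e4 : t ^ 2 * C ≤ |t| * |t| * |C| := by
    rw [e2]; nlinarith [le_abs_self C, mul_self_nonneg |t|]
  have p1 : 0 ≤ |2 * D' - 2 * D| * |t| := by positivity
  have p2 : 0 ≤ |t| * |t| * |C'| := by positivity
  have p3 : 0 ≤ |t| * |t| * |C| := by positivity
  rw [abs_le]
  change _ ≤ f t - f 0 - t * (2 * D) ∧ f t - f 0 - t * (2 * D) ≤ _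
  constructor <;> linarith
end
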